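/- Let n ≥ 3 be an odd integer and let j be an even integer. Let φ be the ring endomorphism of ℤ[z_0, …, z_{2n−1}] sending z_a to −1 for each even a with 2 ≤ a ≤ 2n−2 and fixing the other variables. Then there exist ε ∈ {1,−1} and a monomial M in ℤ[z_0, …, z_{2n−1}] such that φ(R_n(F_{j,n})) = ε·M·(1+z_0)^n. -/

import Mathlib

/-!
Every covering pair of `P_n` joins `Q_n` to `Q_{n+1}`. Fix the trace `J` of an order ideal on `Q_n`.
Each element of `Q_{n+1}` is then forced into the ideal, excluded from it, or free, and the free
ones may be chosen independently. So the ideals with trace `J` contribute a monomial times the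
product of `1 + y` over the free elements.

In suitable coordinates the traces are the regions above the corner-sum functions of `n × n`
alternating sign matrices, and the free elements correspond to the entries `1`. Since `n` is odd and
`j` is even, the cell `(a, b)` carries the variable `y_{2(2a+b+e)}` for some integer `e`, which
specializes to `z_0` if `n ∣ 2a+b+e` and to `-1` otherwise. In the second case a free element
contributes the factor `0`. Hence only those alternating sign matrices survive whose entries `1` all
lie in cells with `n ∣ 2a+b+e`. As `n` is odd, these cells form a permutation matrix; it is the only
surviving matrix, because every row contains an entry `1`. Its `n` free elements contribute
`(1 + z_0)^n`, and its trace and forced elements a signed monomial.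
-/

open MvPolynomial
open scoped Classical

noncomputable section

/-- The set `Q_k`: triples `(r,s,t)` with `|r|+|s| ≤ k-2`, `r+s ≡ k (mod 2)`,
`t ≡ 2|s|-k+2 (mod 4)` and `2|s|-k+2 ≤ t ≤ k-2-2|r|`. -/
def pentagramQ (k : ℤ) : Set (ℤ × ℤ × ℤ) :=
  {p | |p.1| + |p.2.1| ≤ k - 2 ∧ (2 : ℤ) ∣ (p.1 + p.2.1 - k) ∧
    (4 : ℤ) ∣ (p.2.2 - (2 * |p.2.1| - k + 2)) ∧
    2 * |p.2.1| - k + 2 ≤ p.2.2 ∧ p.2.2 ≤ k - 2 - 2 * |p.1|}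

/-- The set `P_k = Q_k ∪ Q_{k+1}`. -/
def pentagramP (k : ℤ) : Set (ℤ × ℤ × ℤ) := pentagramQ k ∪ pentagramQ (k + 1)

/-- The covering relation: `(r',s',t')` covers `(r,s,t)` iff `t' = t + 1` and
`|r'-r| + |s'-s| = 1`. -/
def pentagramCovers (x y : ℤ × ℤ × ℤ) : Prop :=
  y.2.2 = x.2.2 + 1 ∧ |y.1 - x.1| + |y.2.1 - x.2.1| = 1

/-- The partial order on `P_k`: the reflexive-transitive closure of the covering
relation within `P_k`. -/
def pentagramLe (k : ℤ) : (ℤ × ℤ × ℤ) → (ℤ × ℤ × ℤ) → Prop :=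
  Relation.ReflTransGen
    (fun x y => x ∈ pentagramP k ∧ y ∈ pentagramP k ∧ pentagramCovers x y)

/-- An order ideal of `P_k`: a downward-closed subset of `P_k`. -/
def IsPentagramOrderIdeal (k : ℤ) (I : Set (ℤ × ℤ × ℤ)) : Prop :=
  I ⊆ pentagramP k ∧ ∀ x y, y ∈ I → pentagramLe k x y → x ∈ I

/-- `P_k` realized as a `Finset` (it is contained in the displayed finite box). -/
def pentagramPFinset (k : ℤ) : Finset (ℤ × ℤ × ℤ) :=
  ((Finset.Icc (-(k-1)) (k-1)) ×ˢ (Finset.Icc (-(k-1)) (k-1)) ×ˢ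
    (Finset.Icc (-(k-1)) (k-1))).filter (fun p => p ∈ pentagramP k)

/-- The F-polynomial `F_{j,k} = Σ_{order ideals I of P_k} Π_{(r,s,t) ∈ I} y_{3r+s+j}`,
as an element of `ℤ[y_i : i ∈ ℤ] = MvPolynomial ℤ ℤ`. -/
def pentagramF (j k : ℤ) : MvPolynomial ℤ ℤ :=
  ∑ I ∈ (pentagramPFinset k).powerset.filter
      (fun I : Finset (ℤ × ℤ × ℤ) => IsPentagramOrderIdeal k (↑I : Set (ℤ × ℤ × ℤ))),
    ∏ p ∈ I, X (3 * p.1 + p.2.1 + j)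

/-- The ring endomorphism of `ℤ[y_i : i ∈ ℤ]` sending `y_i ↦ -1` for `i ∈ S`
and fixing the other variables; `substNeg S F` is `F|_S`. -/
def substNeg (S : Set ℤ) : MvPolynomial ℤ ℤ →+* MvPolynomial ℤ ℤ :=
  (MvPolynomial.aeval
    (fun i : ℤ => if i ∈ S then (-1 : MvPolynomial ℤ ℤ) else X i)).toRingHom

/-- The arithmetic progression `[a,b]_d = {a, a+d, a+2d, …, b}` (as a subset of `ℤ`). -/
def AP (a b d : ℤ) : Set ℤ := {x | a ≤ x ∧ x ≤ b ∧ d ∣ (x - a)}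

/-- The ring homomorphism `R_n : ℤ[y_i : i ∈ ℤ] → ℤ[z_0, …, z_{2n-1}]` sending
`y_i` to `z_{i mod 2n}` (the variables `z_a` being indexed by `ZMod (2n)`). -/
def pentagramR (n : ℕ) : MvPolynomial ℤ ℤ →+* MvPolynomial (ZMod (2 * n)) ℤ :=
  (MvPolynomial.aeval
    (fun i : ℤ => (X (i : ZMod (2 * n)) : MvPolynomial (ZMod (2 * n)) ℤ))).toRingHom

/-- The ring endomorphism `φ` of `ℤ[z_0, …, z_{2n-1}]` sending `z_a ↦ -1` for each
even `a` with `2 ≤ a ≤ 2n-2`, and fixing the other variables. -/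
def pentagramPhi (n : ℕ) : MvPolynomial (ZMod (2 * n)) ℤ →+* MvPolynomial (ZMod (2 * n)) ℤ :=
  (MvPolynomial.aeval
    (fun a : ZMod (2 * n) =>
      if 2 ≤ a.val ∧ a.val ≤ 2 * n - 2 ∧ 2 ∣ a.val then (-1 : MvPolynomial (ZMod (2 * n)) ℤ)
      else X a)).toRingHom

/-! ### Order ideals of a two-layer poset -/

section TwoLayers

variable {α : Type*} {R : α → α → Prop} {V W J K : Finset α}

/-- Subsets `I` of `P` that are downward closed in `P` when `R x y` means that `y` covers `x`. -/
def IsDownClosedIn (R : α → α → Prop) (P I : Finset α) : Prop :=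
  ∀ x ∈ P, ∀ y ∈ I, R x y → x ∈ I

/-- The elements of the layer `W` that a downward closed set meeting the other layer in `J` has to
contain. -/
def forced (R : α → α → Prop) (W J : Finset α) : Finset α :=
  W.filter fun p => ∃ q ∈ J, R p q

/-- The elements of the layer `W` that a downward closed set meeting the other layer `V` in `J` may
contain. -/
def allowed (R : α → α → Prop) (V W J : Finset α) : Finset α :=
  W.filter fun p => ∀ q ∈ V, R q p → q ∈ J

lemma mem_forced {p : α} : p ∈ forced R W J ↔ p ∈ W ∧ ∃ q ∈ J, R p q :=
  Finset.mem_filter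

lemma mem_allowed {p : α} : p ∈ allowed R V W J ↔ p ∈ W ∧ ∀ q ∈ V, R q p → q ∈ J :=
  Finset.mem_filter

lemma forced_subset : forced R W J ⊆ W :=
  Finset.filter_subset _ _

lemma allowed_subset : allowed R V W J ⊆ W :=
  Finset.filter_subset _ _

variable [DecidableEq α]

lemma isDownClosedIn_union_iff (hVW : Disjoint V W) (hV : ∀ x ∈ V, ∀ y ∈ V, ¬ R x y)
    (hW : ∀ x ∈ W, ∀ y ∈ W, ¬ R x y) (hJ : J ⊆ V) (hK : K ⊆ W) :
    IsDownClosedIn R (V ∪ W) (J ∪ K) ↔ forced R W J ⊆ K ∧ K ⊆ allowed R V W J := by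
  simp only [IsDownClosedIn, Finset.subset_iff, mem_forced, mem_allowed, Finset.mem_union]
  rw [Finset.disjoint_left] at hVW
  constructor
  · intro h
    refine ⟨fun p ⟨hp, q, hq, hpq⟩ => ?_, fun p hp => ⟨hK hp, fun q hq hqp => ?_⟩⟩
    · exact (h p (Or.inr hp) q (Or.inl hq) hpq).resolve_left fun hpJ => hVW (hJ hpJ) hp
    · exact (h q (Or.inl hq) p (Or.inr hp) hqp).resolve_right fun hqK => hVW hq (hK hqK)
  · rintro ⟨hforced, hallowed⟩ x (hx | hx) y (hy | hy) hxy
    · exact absurd hxy (hV x hx y (hJ hy))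
    · exact Or.inl ((hallowed hy).2 x hx hxy)
    · exact Or.inr (hforced ⟨hx, y, hy, hxy⟩)
    · exact absurd hxy (hW x hx y (hK hy))

lemma sum_powerset_union {M : Type*} [AddCommMonoid M] (hVW : Disjoint V W) (f : Finset α → M) :
    ∑ I ∈ (V ∪ W).powerset, f I = ∑ J ∈ V.powerset, ∑ K ∈ W.powerset, f (J ∪ K) := by
  rw [← Finset.sum_product']
  symm
  refine Finset.sum_nbij' (fun x => x.1 ∪ x.2) (fun I => (I ∩ V, I ∩ W)) ?_ ?_ ?_ ?_
    fun _ _ => rfl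
  · intro x hx
    simp only [Finset.mem_product, Finset.mem_powerset] at hx ⊢
    exact Finset.union_subset_union hx.1 hx.2
  · intro I _
    simp only [Finset.mem_product, Finset.mem_powerset]
    exact ⟨Finset.inter_subset_right, Finset.inter_subset_right⟩
  · rintro ⟨J, K⟩ hx
    simp only [Finset.mem_product, Finset.mem_powerset] at hx
    rw [Finset.disjoint_left] at hVW
    ext p <;> simp only [Finset.mem_inter, Finset.mem_union] <;> grind
  · intro I hI
    rw [← Finset.inter_union_distrib_left]
    exact Finset.inter_eq_left.mpr (Finset.mem_powerset.mp hI)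

variable {S : Type*} [CommSemiring S]

lemma sum_Icc_prod (hJK : J ⊆ K) (w : α → S) :
    ∑ I ∈ Finset.Icc J K, ∏ p ∈ I, w p = (∏ p ∈ J, w p) * ∏ p ∈ K \ J, (1 + w p) := by
  have hdisj : ∀ T ∈ (K \ J).powerset, Disjoint J T := fun T hT =>
    Finset.disjoint_sdiff.mono_right (Finset.mem_powerset.mp hT)
  have hinj : Set.InjOn (J ∪ ·) ((K \ J).powerset : Set (Finset α)) := fun T hT T' hT' h => by
    rw [← Finset.union_sdiff_cancel_left (hdisj T hT),
      ← Finset.union_sdiff_cancel_left (hdisj T' hT')]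
    exact congrArg (· \ J) h
  rw [Finset.Icc_eq_image_powerset hJK, Finset.sum_image hinj, Finset.prod_one_add, Finset.mul_sum]
  exact Finset.sum_congr rfl fun T hT => Finset.prod_union (hdisj T hT)

theorem sum_isDownClosedIn_prod (hVW : Disjoint V W) (hV : ∀ x ∈ V, ∀ y ∈ V, ¬ R x y)
    (hW : ∀ x ∈ W, ∀ y ∈ W, ¬ R x y) (w : α → S) :
    ∑ I ∈ (V ∪ W).powerset.filter (IsDownClosedIn R (V ∪ W)), ∏ p ∈ I, w p =
      ∑ J ∈ V.powerset.filter (fun J => forced R W J ⊆ allowed R V W J),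
        (∏ p ∈ J, w p) * (∏ p ∈ forced R W J, w p) *
          ∏ p ∈ allowed R V W J \ forced R W J, (1 + w p) := by
  rw [Finset.sum_filter, sum_powerset_union hVW, Finset.sum_filter]
  refine Finset.sum_congr rfl fun J hJ => ?_
  rw [Finset.mem_powerset] at hJ
  have hfiber : W.powerset.filter (fun K => IsDownClosedIn R (V ∪ W) (J ∪ K)) =
      Finset.Icc (forced R W J) (allowed R V W J) := by
    ext K
    rw [Finset.mem_filter, Finset.mem_powerset, Finset.mem_Icc]
    constructor
    · rintro ⟨hK, h⟩
      exact (isDownClosedIn_union_iff hVW hV hW hJ hK).mp h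
    · intro h
      have hK : K ⊆ W := h.2.trans allowed_subset
      exact ⟨hK, (isDownClosedIn_union_iff hVW hV hW hJ hK).mpr h⟩
  have hprod : ∀ K ∈ Finset.Icc (forced R W J) (allowed R V W J),
      ∏ p ∈ J ∪ K, w p = (∏ p ∈ J, w p) * ∏ p ∈ K, w p := fun K hK =>
    Finset.prod_union <| hVW.mono hJ <|
      (Finset.mem_Icc.mp hK).2.trans allowed_subset
  rw [← Finset.sum_filter, hfiber, Finset.sum_congr rfl hprod, ← Finset.mul_sum]
  split_ifs with h
  · rw [sum_Icc_prod h, mul_assoc]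
  · rw [Finset.Icc_eq_empty h, Finset.sum_empty, mul_zero]

end TwoLayers

/-! ### Coordinates on the pentagram poset -/

/-- Coordinates on `Q_k`, which is the set of points with `c < a`, `c < b` and `a + b ≤ c + k`. The
coordinate `t` decreases as `c` increases. -/
def latticePoint (k a b c : ℕ) : ℤ × ℤ × ℤ :=
  (a + b - k, a - b, 2 * a + 2 * b - k - 2 - 4 * c)

lemma latticePoint_inj {k a b c a' b' c' : ℕ} :
    latticePoint k a b c = latticePoint k a' b' c' ↔ a = a' ∧ b = b' ∧ c = c' := by
  simp only [latticePoint, Prod.mk.injEq]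
  omega

lemma latticePoint_mem_pentagramQ {k a b c : ℕ} :
    latticePoint k a b c ∈ pentagramQ k ↔ c < a ∧ c < b ∧ a + b ≤ c + k := by
  simp only [latticePoint, pentagramQ, Set.mem_ofPred_eq, abs_eq_max_neg]
  omega

lemma exists_latticePoint_of_mem_pentagramQ {k : ℕ} {p : ℤ × ℤ × ℤ} (hp : p ∈ pentagramQ k) :
    ∃ a b c : ℕ, c < a ∧ c < b ∧ a + b ≤ c + k ∧ latticePoint k a b c = p := by
  obtain ⟨r, s, t⟩ := p
  simp only [pentagramQ, Set.mem_ofPred_eq, abs_eq_max_neg] at hp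
  refine ⟨((k + r + s) / 2).toNat, ((k + r - s) / 2).toNat, ((2 * r + k - 2 - t) / 4).toNat, ?_⟩
  simp only [latticePoint, Prod.mk.injEq]
  omega

lemma exists_latticePoint_succ_of_mem_pentagramQ {n : ℕ} {p : ℤ × ℤ × ℤ}
    (hp : p ∈ pentagramQ (n + 1 : ℕ)) :
    ∃ a b c : ℕ, c ≤ a ∧ c ≤ b ∧ a + b + 1 ≤ c + n ∧
      latticePoint (n + 1) (a + 1) (b + 1) c = p := by
  obtain ⟨a, b, c, ha, hb, hab, rfl⟩ :=
    exists_latticePoint_of_mem_pentagramQ (k := n + 1) hp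
  refine ⟨a - 1, b - 1, c, by omega, by omega, by omega, ?_⟩
  rw [latticePoint_inj]
  omega

lemma latticePoint_succ_covers_iff {n a b c a' b' c' : ℕ} :
    pentagramCovers (latticePoint (n + 1) (a + 1) (b + 1) c) (latticePoint n a' b' c') ↔
      (a' = a + 1 ∧ b' = b + 1 ∧ c' = c) ∨ (a' = a ∧ b' = b ∧ c' + 1 = c) := by
  simp only [pentagramCovers, latticePoint, abs_eq_max_neg]
  omega

lemma covers_latticePoint_succ_iff {n a b c a' b' c' : ℕ} :
    pentagramCovers (latticePoint n a' b' c') (latticePoint (n + 1) (a + 1) (b + 1) c) ↔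
      (a' = a ∧ b' = b + 1 ∧ c' = c) ∨ (a' = a + 1 ∧ b' = b ∧ c' = c) := by
  simp only [pentagramCovers, latticePoint, abs_eq_max_neg]
  omega

/-- `Q_k` as a finset. -/
def layerQ (k : ℕ) : Finset (ℤ × ℤ × ℤ) := (pentagramPFinset k).filter (· ∈ pentagramQ k)

lemma mem_pentagramPFinset {k : ℤ} {p : ℤ × ℤ × ℤ} :
    p ∈ pentagramPFinset k ↔ p ∈ pentagramP k := by
  simp only [pentagramPFinset, Finset.mem_filter, Finset.mem_product, Finset.mem_Icc,
    and_iff_right_iff_imp, pentagramP, pentagramQ, Set.mem_union, Set.mem_ofPred_eq,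
    abs_eq_max_neg]
  omega

lemma mem_layerQ {k : ℕ} {p : ℤ × ℤ × ℤ} : p ∈ layerQ k ↔ p ∈ pentagramQ k := by
  rw [layerQ, Finset.mem_filter, mem_pentagramPFinset, pentagramP, Set.mem_union]
  tauto

lemma layerQ_union_layerQ_succ (n : ℕ) : layerQ n ∪ layerQ (n + 1) = pentagramPFinset n := by
  ext p
  simp only [Finset.mem_union, mem_layerQ, mem_pentagramPFinset, pentagramP, Set.mem_union,
    Nat.cast_succ]

lemma disjoint_layerQ_succ (n : ℕ) : Disjoint (layerQ n) (layerQ (n + 1)) := by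
  rw [Finset.disjoint_left]
  intro p hn hsucc
  rw [mem_layerQ] at hn hsucc
  simp only [pentagramQ, Set.mem_ofPred_eq] at hn hsucc
  omega

lemma not_pentagramCovers_of_mem_layerQ {k : ℕ} :
    ∀ x ∈ layerQ k, ∀ y ∈ layerQ k, ¬ pentagramCovers x y := by
  intro x hx y hy
  obtain ⟨a, b, c, -, -, -, rfl⟩ := exists_latticePoint_of_mem_pentagramQ (mem_layerQ.mp hx)
  obtain ⟨a', b', c', -, -, -, rfl⟩ := exists_latticePoint_of_mem_pentagramQ (mem_layerQ.mp hy)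
  simp only [pentagramCovers, latticePoint]
  omega

lemma isPentagramOrderIdeal_iff {k : ℤ} {I : Finset (ℤ × ℤ × ℤ)} (hI : I ⊆ pentagramPFinset k) :
    IsPentagramOrderIdeal k (I : Set (ℤ × ℤ × ℤ)) ↔
      IsDownClosedIn pentagramCovers (pentagramPFinset k) I := by
  constructor
  · intro h x hx y hy hxy
    exact h.2 x y hy (Relation.ReflTransGen.single
      ⟨mem_pentagramPFinset.mp hx, mem_pentagramPFinset.mp (hI hy), hxy⟩)
  · intro h
    refine ⟨fun x hx => mem_pentagramPFinset.mp (hI hx), fun x y hy hxy => ?_⟩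
    induction hxy using Relation.ReflTransGen.head_induction_on with
    | refl => exact hy
    | head hstep _ ih => exact h _ (mem_pentagramPFinset.mpr hstep.1) _ ih hstep.2.2

lemma pentagramF_eq_sum_isDownClosedIn (j : ℤ) (n : ℕ) :
    pentagramF j n =
      ∑ I ∈ (layerQ n ∪ layerQ (n + 1)).powerset.filter
          (IsDownClosedIn pentagramCovers (layerQ n ∪ layerQ (n + 1))),
        ∏ p ∈ I, X (3 * p.1 + p.2.1 + j) := by
  rw [pentagramF, layerQ_union_layerQ_succ]
  exact Finset.sum_congr (Finset.filter_congr fun I hI =>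
    isPentagramOrderIdeal_iff (Finset.mem_powerset.mp hI)) fun _ _ => rfl

/-! ### Corner sums of alternating sign matrices -/

/-- Each sequence `a ↦ C a b` with `b ≤ n` rises from `0` at `a = 0` to `b` at `a = n` in steps of
`0` or `1`. -/
structure HasUnitSteps (n : ℕ) (C : ℕ → ℕ → ℕ) : Prop where
  zero : ∀ b ≤ n, C 0 b = 0
  full : ∀ b ≤ n, C n b = b
  le_succ : ∀ a < n, ∀ b ≤ n, C a b ≤ C (a + 1) b
  succ_le : ∀ a < n, ∀ b ≤ n, C (a + 1) b ≤ C a b + 1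

lemma HasUnitSteps.le {n : ℕ} {C : ℕ → ℕ → ℕ} (h : HasUnitSteps n C) {a b : ℕ}
    (ha : a ≤ n) (hb : b ≤ n) : C a b ≤ a := by
  induction a with
  | zero => exact (h.zero b hb).le
  | succ a ih => exact (h.succ_le a ha b hb).trans (Nat.succ_le_succ (ih (Nat.le_of_succ_le ha)))

lemma HasUnitSteps.add_le {n : ℕ} {C : ℕ → ℕ → ℕ} (h : HasUnitSteps n C) {a b : ℕ}
    (ha : a ≤ n) (hb : b ≤ n) : a + b ≤ C a b + n := by
  induction ha using Nat.decreasingInduction with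
  | self => rw [h.full b hb, add_comm]
  | of_succ a ha ih =>
    have := h.succ_le a ha b hb
    omega

/-- Corner-sum matrices of `n × n` alternating sign matrices: `C a b` is the sum of the entries in
the first `a` rows and `b` columns. Only indices up to `n` matter. -/
structure IsCornerSum (n : ℕ) (C : ℕ → ℕ → ℕ) : Prop where
  left : HasUnitSteps n C
  right : HasUnitSteps n (fun b a => C a b)

/-- The entry of the alternating sign matrix with corner sums `C` in the cell `(a, b)` (rows and
columns counted from `0`) is `1`. -/
def IsOneEntry (C : ℕ → ℕ → ℕ) (a b : ℕ) : Prop :=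
  C a (b + 1) = C a b ∧ C (a + 1) b = C a b ∧ C (a + 1) (b + 1) = C a b + 1

/-- The corner sums of the permutation matrix of `π`. -/
def permCorner {n : ℕ} (π : Equiv.Perm (Fin n)) (a b : ℕ) : ℕ :=
  ∑ i : Fin n, if (i : ℕ) < a ∧ (π i : ℕ) < b then 1 else 0

lemma permCorner_succ {n : ℕ} (π : Equiv.Perm (Fin n)) (a : Fin n) (b : ℕ) :
    permCorner π (a + 1) b = permCorner π a b + if (π a : ℕ) < b then 1 else 0 := by
  have hsplit : ∀ i : Fin n, (if (i : ℕ) < a + 1 ∧ (π i : ℕ) < b then 1 else 0) =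
      (if (i : ℕ) < a ∧ (π i : ℕ) < b then 1 else 0) +
        if a = i then (if (π i : ℕ) < b then 1 else 0) else 0 := by
    intro i
    simp only [Fin.ext_iff]
    split_ifs <;> omega
  simp only [permCorner, hsplit, Finset.sum_add_distrib, Finset.sum_ite_eq, Finset.mem_univ,
    if_true]

lemma permCorner_symm {n : ℕ} (π : Equiv.Perm (Fin n)) (a b : ℕ) :
    permCorner π.symm b a = permCorner π a b := by
  rw [permCorner, ← Equiv.sum_comp π]
  simp only [Equiv.symm_apply_apply, permCorner]
  exact Finset.sum_congr rfl fun i _ => if_congr and_comm rfl rfl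

lemma hasUnitSteps_permCorner {n : ℕ} (π : Equiv.Perm (Fin n)) :
    HasUnitSteps n (permCorner π) where
  zero b _ := by simp [permCorner]
  full b hb := by
    rw [← permCorner_symm]
    simp [permCorner, Fin.card_filter_val_lt, hb]
  le_succ a ha b _ := by
    rw [permCorner_succ π ⟨a, ha⟩]
    exact Nat.le_add_right _ _
  succ_le a ha b _ := by
    rw [permCorner_succ π ⟨a, ha⟩]
    gcongr
    split_ifs <;> simp

lemma isCornerSum_permCorner {n : ℕ} (π : Equiv.Perm (Fin n)) : IsCornerSum n (permCorner π) where
  left := hasUnitSteps_permCorner π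
  right := by
    simp only [← permCorner_symm π]
    exact hasUnitSteps_permCorner π.symm

lemma isOneEntry_permCorner_iff {n : ℕ} (π : Equiv.Perm (Fin n)) {a b : Fin n} :
    IsOneEntry (permCorner π) a b ↔ π a = b := by
  have hcol : permCorner π a (b + 1) =
      permCorner π a b + if (π.symm b : ℕ) < a then 1 else 0 := by
    rw [← permCorner_symm, permCorner_succ, permCorner_symm]
  have hinv : π.symm b = a ↔ π a = b := by rw [Equiv.symm_apply_eq, eq_comm]
  simp only [IsOneEntry, permCorner_succ, hcol, Fin.ext_iff] at hinv ⊢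
  split_ifs <;> omega

lemma iff_lt_of_forall_jump_eq {n m : ℕ} {p : ℕ → Prop} (h0 : ¬ p 0) (hn : p n)
    (hjump : ∀ b < n, ¬ p b → p (b + 1) → b = m) : ∀ b ≤ n, p b ↔ m < b := by
  intro b hb
  constructor
  · intro hpb
    induction b with
    | zero => exact absurd hpb h0
    | succ b ih =>
      by_cases hp : p b
      · exact Nat.lt_succ_of_lt (ih (Nat.le_of_succ_le hb) hp)
      · exact (hjump b hb hp hpb).ge.trans_lt (Nat.lt_succ_self b)
  · intro hmb
    induction hb using Nat.decreasingInduction with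
    | self => exact hn
    | of_succ b hb ih =>
      by_contra hp
      exact hmb.ne' (hjump b hb hp (ih (Nat.lt_succ_of_lt hmb)))

lemma IsCornerSum.succ_eq_add_ite {n : ℕ} {C : ℕ → ℕ → ℕ} (h : IsCornerSum n C) {a m : ℕ}
    (ha : a < n) (hone : ∀ b < n, IsOneEntry C a b → b = m) {b : ℕ} (hb : b ≤ n) :
    C (a + 1) b = C a b + if m < b then 1 else 0 := by
  have hjump : ∀ b < n, ¬ C (a + 1) b = C a b + 1 → C (a + 1) (b + 1) = C a (b + 1) + 1 →
      b = m := by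
    intro b hb hb0 hb1
    have := h.left.le_succ a ha b hb.le
    have := h.left.succ_le a ha b hb.le
    have := h.right.le_succ b hb a ha.le
    have := h.right.succ_le b hb (a + 1) ha
    exact hone b hb ⟨by omega, by omega, by omega⟩
  have hlt : C (a + 1) b = C a b + 1 ↔ m < b :=
    iff_lt_of_forall_jump_eq (p := fun b => C (a + 1) b = C a b + 1)
      (by simp [h.right.zero (a + 1) ha, h.right.zero a ha.le])
      (by simp [h.right.full (a + 1) ha, h.right.full a ha.le]) hjump b hb
  have := h.left.le_succ a ha b hb
  have := h.left.succ_le a ha b hb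
  split_ifs <;> omega

lemma IsCornerSum.eq_permCorner {n : ℕ} {C : ℕ → ℕ → ℕ} (h : IsCornerSum n C)
    {π : Equiv.Perm (Fin n)} (hone : ∀ a b : Fin n, IsOneEntry C a b → π a = b) :
    ∀ a ≤ n, ∀ b ≤ n, C a b = permCorner π a b := by
  intro a ha b hb
  induction a with
  | zero => rw [h.left.zero b hb, (isCornerSum_permCorner π).left.zero b hb]
  | succ a ih =>
    have hrow : ∀ b < n, IsOneEntry C a b → b = π ⟨a, ha⟩ := fun b hb hab =>
      (congrArg Fin.val (hone ⟨a, ha⟩ ⟨b, hb⟩ hab)).symm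
    rw [h.succ_eq_add_ite ha hrow hb, ih (Nat.le_of_succ_le ha),
      permCorner_succ π ⟨a, ha⟩]

/-! ### Traces of order ideals -/

/-- The subset of `Q_n` lying above the graph of `C`, that is, consisting of the points with
`C a b ≤ c`. For corner-sum matrices `C` these are the intersections of `Q_n` with the order ideals
of `P_n`. -/
def aboveGraph (n : ℕ) (C : ℕ → ℕ → ℕ) : Finset (ℤ × ℤ × ℤ) :=
  (layerQ n).filter fun p => ∃ a b c : ℕ, latticePoint n a b c = p ∧ C a b ≤ c

lemma aboveGraph_subset (n : ℕ) (C : ℕ → ℕ → ℕ) : aboveGraph n C ⊆ layerQ n :=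
  Finset.filter_subset _ _

lemma latticePoint_mem_layerQ {k a b c : ℕ} :
    latticePoint k a b c ∈ layerQ k ↔ c < a ∧ c < b ∧ a + b ≤ c + k :=
  mem_layerQ.trans latticePoint_mem_pentagramQ

lemma latticePoint_mem_aboveGraph {n a b c : ℕ} {C : ℕ → ℕ → ℕ} :
    latticePoint n a b c ∈ aboveGraph n C ↔
      (c < a ∧ c < b ∧ a + b ≤ c + n) ∧ C a b ≤ c := by
  rw [aboveGraph, Finset.mem_filter, latticePoint_mem_layerQ]
  refine and_congr_right fun _ => ⟨?_, fun h => ⟨a, b, c, rfl, h⟩⟩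
  rintro ⟨a', b', c', heq, h⟩
  obtain ⟨rfl, rfl, rfl⟩ := latticePoint_inj.mp heq
  exact h

lemma ext_of_subset_layerQ {k : ℕ} {J J' : Finset (ℤ × ℤ × ℤ)} (hJ : J ⊆ layerQ k)
    (hJ' : J' ⊆ layerQ k)
    (h : ∀ a b c : ℕ, c < a → c < b → a + b ≤ c + k →
      (latticePoint k a b c ∈ J ↔ latticePoint k a b c ∈ J')) : J = J' := by
  have himp : ∀ p ∈ layerQ k, (p ∈ J ↔ p ∈ J') := by
    intro p hp
    obtain ⟨a, b, c, ha, hb, hab, rfl⟩ := exists_latticePoint_of_mem_pentagramQ (mem_layerQ.mp hp)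
    exact h a b c ha hb hab
  ext p
  exact ⟨fun hp => (himp p (hJ hp)).mp hp, fun hp => (himp p (hJ' hp)).mpr hp⟩

lemma aboveGraph_congr {n : ℕ} {C C' : ℕ → ℕ → ℕ} (h : ∀ a ≤ n, ∀ b ≤ n, C a b = C' a b) :
    aboveGraph n C = aboveGraph n C' := by
  refine ext_of_subset_layerQ (aboveGraph_subset n C) (aboveGraph_subset n C') ?_
  intro a b c ha hb hab
  rw [latticePoint_mem_aboveGraph, latticePoint_mem_aboveGraph,
    h a (by omega) b (by omega)]

/-- The elements of `Q_{n+1}` contained in every order ideal of `P_n` that meets `Q_n` in `J`. -/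
abbrev forcedQ (n : ℕ) (J : Finset (ℤ × ℤ × ℤ)) : Finset (ℤ × ℤ × ℤ) :=
  forced pentagramCovers (layerQ (n + 1)) J

/-- The elements of `Q_{n+1}` contained in some order ideal of `P_n` that meets `Q_n` in `J`,
provided that there is any such ideal. -/
abbrev allowedQ (n : ℕ) (J : Finset (ℤ × ℤ × ℤ)) : Finset (ℤ × ℤ × ℤ) :=
  allowed pentagramCovers (layerQ n) (layerQ (n + 1)) J

lemma latticePoint_succ_mem_layerQ {n a b c : ℕ} :
    latticePoint (n + 1) (a + 1) (b + 1) c ∈ layerQ (n + 1) ↔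
      c ≤ a ∧ c ≤ b ∧ a + b + 1 ≤ c + n := by
  rw [latticePoint_mem_layerQ]
  omega

lemma latticePoint_succ_mem_forcedQ {n a b c : ℕ} {J : Finset (ℤ × ℤ × ℤ)} (hJ : J ⊆ layerQ n) :
    latticePoint (n + 1) (a + 1) (b + 1) c ∈ forcedQ n J ↔
      (c ≤ a ∧ c ≤ b ∧ a + b + 1 ≤ c + n) ∧
        (latticePoint n (a + 1) (b + 1) c ∈ J ∨ ∃ d, d + 1 = c ∧ latticePoint n a b d ∈ J) := by
  rw [mem_forced, latticePoint_succ_mem_layerQ]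
  refine and_congr_right fun _ => ⟨?_, ?_⟩
  · rintro ⟨q, hq, hcov⟩
    obtain ⟨a', b', c', -, -, -, rfl⟩ :=
      exists_latticePoint_of_mem_pentagramQ (mem_layerQ.mp (hJ hq))
    rcases latticePoint_succ_covers_iff.mp hcov with ⟨rfl, rfl, rfl⟩ | ⟨rfl, rfl, hc⟩
    · exact Or.inl hq
    · exact Or.inr ⟨c', hc, hq⟩
  · rintro (hq | ⟨d, hd, hq⟩)
    · exact ⟨_, hq, latticePoint_succ_covers_iff.mpr (Or.inl ⟨rfl, rfl, rfl⟩)⟩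
    · exact ⟨_, hq, latticePoint_succ_covers_iff.mpr (Or.inr ⟨rfl, rfl, hd⟩)⟩

lemma latticePoint_succ_mem_allowedQ {n a b c : ℕ} {J : Finset (ℤ × ℤ × ℤ)} :
    latticePoint (n + 1) (a + 1) (b + 1) c ∈ allowedQ n J ↔
      (c ≤ a ∧ c ≤ b ∧ a + b + 1 ≤ c + n) ∧
        (c < a → latticePoint n a (b + 1) c ∈ J) ∧ (c < b → latticePoint n (a + 1) b c ∈ J) := by
  rw [mem_allowed, latticePoint_succ_mem_layerQ]
  refine and_congr_right fun hc => ⟨fun h => ⟨fun hca => ?_, fun hcb => ?_⟩, ?_⟩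
  · exact h _ (latticePoint_mem_layerQ.mpr (by omega))
      (covers_latticePoint_succ_iff.mpr (Or.inl ⟨rfl, rfl, rfl⟩))
  · exact h _ (latticePoint_mem_layerQ.mpr (by omega))
      (covers_latticePoint_succ_iff.mpr (Or.inr ⟨rfl, rfl, rfl⟩))
  · rintro ⟨ha, hb⟩ q hq hcov
    obtain ⟨a', b', c', hca, hcb, -, rfl⟩ :=
      exists_latticePoint_of_mem_pentagramQ (mem_layerQ.mp hq)
    rcases covers_latticePoint_succ_iff.mp hcov with ⟨rfl, rfl, rfl⟩ | ⟨rfl, rfl, rfl⟩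
    · exact ha hca
    · exact hb hcb

section CornerSum

variable {n : ℕ} {C : ℕ → ℕ → ℕ}

lemma IsCornerSum.mem_forcedQ_aboveGraph (h : IsCornerSum n C) {a b c : ℕ} (ha : a < n)
    (hb : b < n) :
    latticePoint (n + 1) (a + 1) (b + 1) c ∈ forcedQ n (aboveGraph n C) ↔
      (c ≤ a ∧ c ≤ b) ∧ min (C (a + 1) (b + 1)) (C a b + 1) ≤ c := by
  have hcell := h.left.add_le (a := a + 1) (b := b + 1) ha hb
  have hcell' := h.left.add_le ha.le hb.le
  rw [latticePoint_succ_mem_forcedQ (aboveGraph_subset n C), latticePoint_mem_aboveGraph]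
  simp only [latticePoint_mem_aboveGraph]
  constructor
  · rintro ⟨_, _ | ⟨d, rfl, _⟩⟩ <;> omega
  · rintro ⟨⟨hca, hcb⟩, hc⟩
    refine ⟨by omega, (min_le_iff.mp hc).imp (fun hc => by omega) fun hc => ?_⟩
    exact ⟨c - 1, by omega⟩

lemma IsCornerSum.mem_allowedQ_aboveGraph (h : IsCornerSum n C) {a b c : ℕ} (ha : a < n)
    (hb : b < n) :
    latticePoint (n + 1) (a + 1) (b + 1) c ∈ allowedQ n (aboveGraph n C) ↔
      (c ≤ a ∧ c ≤ b) ∧ max (C a (b + 1)) (C (a + 1) b) ≤ c := by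
  have hle_left := h.left.le (a := a) (b := b + 1) ha.le hb
  have hle_right := h.right.le (a := b) (b := a + 1) hb.le ha
  have hcell := h.left.add_le (a := a) (b := b + 1) ha.le hb
  rw [latticePoint_succ_mem_allowedQ, latticePoint_mem_aboveGraph, latticePoint_mem_aboveGraph]
  omega

lemma IsCornerSum.forcedQ_subset_allowedQ (h : IsCornerSum n C) :
    forcedQ n (aboveGraph n C) ⊆ allowedQ n (aboveGraph n C) := by
  intro p hp
  obtain ⟨a, b, c, hca, hcb, hc, rfl⟩ :=
    exists_latticePoint_succ_of_mem_pentagramQ (mem_layerQ.mp (forced_subset hp))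
  have ha : a < n := by omega
  have hb : b < n := by omega
  rw [h.mem_forcedQ_aboveGraph ha hb] at hp
  rw [h.mem_allowedQ_aboveGraph ha hb]
  have := h.left.le_succ a ha (b + 1) hb
  have := h.left.succ_le a ha b hb.le
  have := h.right.le_succ b hb (a + 1) ha
  have := h.right.succ_le b hb a ha.le
  omega

lemma IsCornerSum.mem_free_iff (h : IsCornerSum n C) {p : ℤ × ℤ × ℤ} :
    p ∈ allowedQ n (aboveGraph n C) \ forcedQ n (aboveGraph n C) ↔
      ∃ a b : Fin n, IsOneEntry C a b ∧ latticePoint (n + 1) (a + 1) (b + 1) (C a b) = p := by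
  rw [Finset.mem_sdiff]
  constructor
  · rintro ⟨hallowed, hforced⟩
    obtain ⟨a, b, c, hca, hcb, hc, rfl⟩ :=
      exists_latticePoint_succ_of_mem_pentagramQ (mem_layerQ.mp (allowed_subset hallowed))
    have ha : a < n := by omega
    have hb : b < n := by omega
    rw [h.mem_allowedQ_aboveGraph ha hb] at hallowed
    rw [h.mem_forcedQ_aboveGraph ha hb] at hforced
    have := h.left.le_succ a ha b hb.le
    have := h.right.le_succ b hb a ha.le
    have := h.left.succ_le a ha (b + 1) hb
    obtain rfl : c = C a b := by omega
    have hone : IsOneEntry C a b := ⟨by omega, by omega, by omega⟩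
    exact ⟨⟨a, ha⟩, ⟨b, hb⟩, hone, rfl⟩
  · rintro ⟨a, b, ⟨hright, hdown, hdiag⟩, rfl⟩
    have hle_left := h.left.le a.isLt.le b.isLt.le
    have hle_right := h.right.le b.isLt.le a.isLt.le
    rw [h.mem_allowedQ_aboveGraph a.isLt b.isLt, h.mem_forcedQ_aboveGraph a.isLt b.isLt]
    omega

end CornerSum

/-- The set of those `c ≥ a + b - n` for which the point `(a, b, c)` lies in the set `J` of lattice
points, extended beyond `Q_n` by all the points with `a ≤ c` or `b ≤ c`. -/
def extendedTrace (n : ℕ) (J : Finset (ℤ × ℤ × ℤ)) (a b : ℕ) : Set ℕ :=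
  {c | a + b ≤ c + n ∧ (c < a → c < b → latticePoint n a b c ∈ J)}

/-- The function whose graph is the lower boundary of the extended trace. When `J` is the trace of
an order ideal of `P_n`, it is the part of `Q_n` above that graph. -/
def traceCorner (n : ℕ) (J : Finset (ℤ × ℤ × ℤ)) (a b : ℕ) : ℕ := sInf (extendedTrace n J a b)

lemma hasUnitSteps_sInf {n : ℕ} {E : ℕ → ℕ → Set ℕ} (hne : ∀ a b, (E a b).Nonempty)
    (hzero : ∀ b ≤ n, 0 ∈ E 0 b) (hfull : ∀ b ≤ n, IsLeast (E n b) b)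
    (hanti : ∀ a b, E (a + 1) b ⊆ E a b) (hstep : ∀ a b, ∀ c ∈ E a b, c + 1 ∈ E (a + 1) b) :
    HasUnitSteps n fun a b => sInf (E a b) where
  zero b hb := Nat.sInf_eq_zero.mpr (Or.inl (hzero b hb))
  full b hb := (hfull b hb).csInf_eq
  le_succ a _ b _ := Nat.sInf_le (hanti a b (Nat.sInf_mem (hne (a + 1) b)))
  succ_le a _ b _ := Nat.sInf_le (hstep a b _ (Nat.sInf_mem (hne a b)))

section Trace

variable {n : ℕ} {J : Finset (ℤ × ℤ × ℤ)}

lemma extendedTrace_nonempty (a b : ℕ) : (extendedTrace n J a b).Nonempty :=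
  ⟨a + b, by omega, by omega⟩

lemma zero_mem_extendedTrace_zero_left {b : ℕ} (hb : b ≤ n) : 0 ∈ extendedTrace n J 0 b :=
  ⟨by omega, by omega⟩

lemma zero_mem_extendedTrace_zero_right {a : ℕ} (ha : a ≤ n) : 0 ∈ extendedTrace n J a 0 :=
  ⟨by omega, by omega⟩

lemma isLeast_extendedTrace_self_left (b : ℕ) : IsLeast (extendedTrace n J n b) b :=
  ⟨⟨by omega, by omega⟩, fun _ hc => by have := hc.1; omega⟩

lemma isLeast_extendedTrace_self_right (a : ℕ) : IsLeast (extendedTrace n J a n) a :=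
  ⟨⟨by omega, by omega⟩, fun _ hc => by have := hc.1; omega⟩

lemma extendedTrace_succ_left_subset (hJ : J ⊆ layerQ n) (h : forcedQ n J ⊆ allowedQ n J)
    (a b : ℕ) : extendedTrace n J (a + 1) b ⊆ extendedTrace n J a b := by
  rintro c ⟨hc, hmem⟩
  refine ⟨by omega, fun hca hcb => ?_⟩
  obtain ⟨b, rfl⟩ := Nat.exists_eq_add_one_of_ne_zero (Nat.ne_zero_of_lt hcb)
  have hforced := (latticePoint_succ_mem_forcedQ hJ).mpr
    ⟨by omega, Or.inl (hmem (Nat.lt_succ_of_lt hca) hcb)⟩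
  exact (latticePoint_succ_mem_allowedQ.mp (h hforced)).2.1 hca

lemma extendedTrace_succ_right_subset (hJ : J ⊆ layerQ n) (h : forcedQ n J ⊆ allowedQ n J)
    (a b : ℕ) : extendedTrace n J a (b + 1) ⊆ extendedTrace n J a b := by
  rintro c ⟨hc, hmem⟩
  refine ⟨by omega, fun hca hcb => ?_⟩
  obtain ⟨a, rfl⟩ := Nat.exists_eq_add_one_of_ne_zero (Nat.ne_zero_of_lt hca)
  have hforced := (latticePoint_succ_mem_forcedQ hJ).mpr
    ⟨by omega, Or.inl (hmem hca (Nat.lt_succ_of_lt hcb))⟩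
  exact (latticePoint_succ_mem_allowedQ.mp (h hforced)).2.2 hcb

lemma succ_mem_extendedTrace_succ_left (hJ : J ⊆ layerQ n) (h : forcedQ n J ⊆ allowedQ n J)
    (a b : ℕ) : ∀ c ∈ extendedTrace n J a b, c + 1 ∈ extendedTrace n J (a + 1) b := by
  rintro c ⟨hc, hmem⟩
  refine ⟨by omega, fun hca hcb => ?_⟩
  have hforced := (latticePoint_succ_mem_forcedQ hJ).mpr
    ⟨by omega, Or.inr ⟨c, rfl, hmem (Nat.lt_of_succ_lt_succ hca) (Nat.lt_of_succ_lt hcb)⟩⟩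
  exact (latticePoint_succ_mem_allowedQ.mp (h hforced)).2.2 hcb

lemma succ_mem_extendedTrace_succ_right (hJ : J ⊆ layerQ n) (h : forcedQ n J ⊆ allowedQ n J)
    (a b : ℕ) : ∀ c ∈ extendedTrace n J a b, c + 1 ∈ extendedTrace n J a (b + 1) := by
  rintro c ⟨hc, hmem⟩
  refine ⟨by omega, fun hca hcb => ?_⟩
  have hforced := (latticePoint_succ_mem_forcedQ hJ).mpr
    ⟨by omega, Or.inr ⟨c, rfl, hmem (Nat.lt_of_succ_lt hca) (Nat.lt_of_succ_lt_succ hcb)⟩⟩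
  exact (latticePoint_succ_mem_allowedQ.mp (h hforced)).2.1 hca

lemma isCornerSum_traceCorner (hJ : J ⊆ layerQ n) (h : forcedQ n J ⊆ allowedQ n J) :
    IsCornerSum n (traceCorner n J) where
  left := hasUnitSteps_sInf extendedTrace_nonempty
    (fun _ => zero_mem_extendedTrace_zero_left) (fun b _ => isLeast_extendedTrace_self_left b)
    (extendedTrace_succ_left_subset hJ h) (succ_mem_extendedTrace_succ_left hJ h)
  right := hasUnitSteps_sInf (fun b a => extendedTrace_nonempty a b)
    (fun _ => zero_mem_extendedTrace_zero_right) (fun a _ => isLeast_extendedTrace_self_right a)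
    (fun b a => extendedTrace_succ_right_subset hJ h a b)
    (fun b a => succ_mem_extendedTrace_succ_right hJ h a b)

lemma mem_extendedTrace_iff (hJ : J ⊆ layerQ n) (h : forcedQ n J ⊆ allowedQ n J) {a b c : ℕ} :
    c ∈ extendedTrace n J a b ↔ traceCorner n J a b ≤ c := by
  refine ⟨fun hc => Nat.sInf_le hc, fun hc => ?_⟩
  induction c, hc using Nat.le_induction with
  | base => exact Nat.sInf_mem (extendedTrace_nonempty a b)
  | succ c _ ih =>
    exact extendedTrace_succ_left_subset hJ h a b (succ_mem_extendedTrace_succ_left hJ h a b c ih)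

lemma aboveGraph_traceCorner (hJ : J ⊆ layerQ n) (h : forcedQ n J ⊆ allowedQ n J) :
    aboveGraph n (traceCorner n J) = J := by
  refine ext_of_subset_layerQ (aboveGraph_subset n _) hJ fun a b c ha hb hab => ?_
  rw [latticePoint_mem_aboveGraph, and_iff_right ⟨ha, hb, hab⟩, ← mem_extendedTrace_iff hJ h]
  exact ⟨fun hc => hc.2 ha hb, fun hp => ⟨hab, fun _ _ => hp⟩⟩

end Trace

section SurvivingTerm

variable {n : ℕ} {S : Type*} [CommRing S] {w : ℤ × ℤ × ℤ → S} {π : Equiv.Perm (Fin n)}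

lemma prod_free_eq_zero {J : Finset (ℤ × ℤ × ℤ)} (hJ : J ⊆ layerQ n)
    (h : forcedQ n J ⊆ allowedQ n J) (hne : J ≠ aboveGraph n (permCorner π))
    (hw : ∀ a b : Fin n, ∀ c : ℕ, π a ≠ b → w (latticePoint (n + 1) (a + 1) (b + 1) c) = -1) :
    ∏ p ∈ allowedQ n J \ forcedQ n J, (1 + w p) = 0 := by
  set C := traceCorner n J
  have hC : IsCornerSum n C := isCornerSum_traceCorner hJ h
  have hCJ : aboveGraph n C = J := aboveGraph_traceCorner hJ h
  obtain ⟨a, b, hone, hab⟩ : ∃ a b : Fin n, IsOneEntry C a b ∧ π a ≠ b := by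
    by_contra! hcon
    exact hne (hCJ.symm.trans (aboveGraph_congr (hC.eq_permCorner hcon)))
  have hfree := hC.mem_free_iff.mpr ⟨a, b, hone, rfl⟩
  rw [hCJ] at hfree
  exact Finset.prod_eq_zero hfree (by rw [hw a b _ hab, add_neg_cancel])

lemma prod_free_permCorner {M : Type*} [CommMonoid M] (f : ℤ × ℤ × ℤ → M) (π : Equiv.Perm (Fin n)) :
    ∏ p ∈ allowedQ n (aboveGraph n (permCorner π)) \ forcedQ n (aboveGraph n (permCorner π)), f p =
      ∏ a : Fin n, f (latticePoint (n + 1) (a + 1) (π a + 1) (permCorner π a (π a))) := by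
  symm
  refine Finset.prod_nbij
    (fun a => latticePoint (n + 1) (a + 1) (π a + 1) (permCorner π a (π a))) ?_ ?_ ?_
    fun _ _ => rfl
  · intro a _
    exact (isCornerSum_permCorner π).mem_free_iff.mpr
      ⟨a, π a, (isOneEntry_permCorner_iff π).mpr rfl, rfl⟩
  · intro a _ a' _ heq
    exact Fin.ext (Nat.succ_injective (latticePoint_inj.mp heq).1)
  · intro p hp
    obtain ⟨a, b, hone, rfl⟩ := (isCornerSum_permCorner π).mem_free_iff.mp hp
    obtain rfl := (isOneEntry_permCorner_iff π).mp hone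
    exact ⟨a, Finset.mem_coe.mpr (Finset.mem_univ a), rfl⟩

theorem sum_isDownClosedIn_prod_eq_of_perm
    (hw : ∀ a b : Fin n, ∀ c : ℕ, π a ≠ b → w (latticePoint (n + 1) (a + 1) (b + 1) c) = -1) :
    ∑ I ∈ (layerQ n ∪ layerQ (n + 1)).powerset.filter
        (IsDownClosedIn pentagramCovers (layerQ n ∪ layerQ (n + 1))), ∏ p ∈ I, w p =
      (∏ p ∈ aboveGraph n (permCorner π), w p) *
        (∏ p ∈ forcedQ n (aboveGraph n (permCorner π)), w p) *
        ∏ a : Fin n, (1 + w (latticePoint (n + 1) (a + 1) (π a + 1) (permCorner π a (π a)))) := by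
  rw [sum_isDownClosedIn_prod (disjoint_layerQ_succ n) not_pentagramCovers_of_mem_layerQ
    not_pentagramCovers_of_mem_layerQ, Finset.sum_eq_single (aboveGraph n (permCorner π)),
    prod_free_permCorner (fun p => 1 + w p)]
  · intro J hJ hne
    rw [Finset.mem_filter, Finset.mem_powerset] at hJ
    rw [prod_free_eq_zero hJ.1 hJ.2 hne hw, mul_zero]
  · intro hnot
    refine absurd (Finset.mem_filter.mpr ⟨Finset.mem_powerset.mpr ?_, ?_⟩) hnot
    · exact aboveGraph_subset n _
    · exact (isCornerSum_permCorner π).forcedQ_subset_allowedQ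

end SurvivingTerm

/-! ### The specialization -/

/-- The multiplicative monoid of signed monomials `± z^d`. -/
def signedMonomials (σ : Type*) : Submonoid (MvPolynomial σ ℤ) where
  carrier := {x | ∃ (ε : ℤ) (d : σ →₀ ℕ), (ε = 1 ∨ ε = -1) ∧ x = C ε * monomial d 1}
  one_mem' := ⟨1, 0, Or.inl rfl, by simp⟩
  mul_mem' := by
    rintro _ _ ⟨ε, d, hε, rfl⟩ ⟨ε', d', hε', rfl⟩
    refine ⟨ε * ε', d + d', ?_, ?_⟩
    · rcases hε with rfl | rfl <;> rcases hε' with rfl | rfl <;> simp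
    · rw [C_mul, mul_mul_mul_comm, monomial_mul, one_mul]

/-- The image of `y_i` under `φ ∘ R_n`. -/
def specializedVar (n : ℕ) (i : ℤ) : MvPolynomial (ZMod (2 * n)) ℤ :=
  pentagramPhi n (pentagramR n (X i))

lemma specializedVar_eq_ite (n : ℕ) (i : ℤ) :
    specializedVar n i = if 2 ≤ (i : ZMod (2 * n)).val ∧ (i : ZMod (2 * n)).val ≤ 2 * n - 2 ∧
      2 ∣ (i : ZMod (2 * n)).val then -1 else X (i : ZMod (2 * n)) := by
  simp [specializedVar, pentagramPhi, pentagramR]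

lemma specializedVar_mem_signedMonomials (n : ℕ) (i : ℤ) :
    specializedVar n i ∈ signedMonomials (ZMod (2 * n)) := by
  rw [specializedVar_eq_ite]
  split_ifs
  · exact ⟨-1, 0, Or.inr rfl, by simp⟩
  · exact ⟨1, Finsupp.single (i : ZMod (2 * n)) 1, Or.inl rfl, by simp [X]⟩

lemma specializedVar_two_mul_of_dvd {n : ℕ} {m : ℤ} (h : (n : ℤ) ∣ m) :
    specializedVar n (2 * m) = X 0 := by
  have hzero : ((2 * m : ℤ) : ZMod (2 * n)) = 0 := by
    rw [ZMod.intCast_zmod_eq_zero_iff_dvd]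
    push_cast
    exact mul_dvd_mul_left 2 h
  rw [specializedVar_eq_ite, hzero, if_neg]
  simp

lemma specializedVar_two_mul_of_not_dvd {n : ℕ} (hn : 0 < n) {m : ℤ} (h : ¬ (n : ℤ) ∣ m) :
    specializedVar n (2 * m) = -1 := by
  have : NeZero (2 * n) := ⟨by omega⟩
  have hval : (((2 * m : ℤ) : ZMod (2 * n)).val : ℤ) = 2 * (m % n) := by
    rw [ZMod.val_intCast]
    push_cast
    exact Int.mul_emod_mul_of_pos _ _ two_pos
  have hlower : m % n ≠ 0 := fun h0 => h (Int.dvd_of_emod_eq_zero h0)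
  have hupper := Int.emod_lt_of_pos m (b := n) (by omega)
  rw [specializedVar_eq_ite, if_pos]
  omega

lemma exists_perm_apply_eq_iff_dvd {n : ℕ} (hodd : Odd (n : ℤ)) (e : ℤ) :
    ∃ π : Equiv.Perm (Fin n), ∀ a b : Fin n, π a = b ↔ (n : ℤ) ∣ 2 * a + b + e := by
  have heq : ∀ a b : Fin n, (n : ℤ) ∣ a - b → a = b := fun a b h => by
    have := Int.eq_zero_of_abs_lt_dvd h (by rw [abs_lt]; omega)
    omega
  have hcol : ∀ a : Fin n, ∃ b : Fin n, (n : ℤ) ∣ 2 * a + b + e := fun a => by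
    have hn : (0 : ℤ) < n := Nat.cast_pos.mpr a.pos
    have hnonneg := Int.emod_nonneg (-(2 * a + e)) hn.ne'
    have hlt := Int.emod_lt_of_pos (-(2 * a + e)) hn
    have hdiv := Int.mul_ediv_add_emod (-(2 * a + e)) n
    refine ⟨⟨((-(2 * a + e)) % n).toNat, by omega⟩, -((-(2 * a + e)) / n), ?_⟩
    rw [Int.toNat_of_nonneg hnonneg]
    linarith
  have hcoprime : Int.gcd n 2 = 1 := Nat.coprime_two_right.mpr (by exact_mod_cast hodd)
  choose f hf using hcol
  have hinj : Function.Injective f := fun a a' h => by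
    have hdvd : (n : ℤ) ∣ 2 * (a - a') := by
      convert Int.dvd_sub (hf a) (hf a') using 1
      rw [h]
      ring
    exact heq a a' (Int.dvd_of_dvd_mul_right_of_gcd_one hdvd hcoprime)
  refine ⟨Equiv.ofBijective f (Finite.injective_iff_bijective.mp hinj), fun a b => ?_⟩
  rw [Equiv.ofBijective_apply]
  refine ⟨fun h => h ▸ hf a, fun h => heq _ _ ?_⟩
  convert Int.dvd_sub (hf a) h using 1
  ring

lemma latticePoint_succ_variable_index {n a b c : ℕ} {e j : ℤ} (he : 3 - 3 * n + j = 2 * e) :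
    3 * (latticePoint (n + 1) (a + 1) (b + 1) c).1 +
      (latticePoint (n + 1) (a + 1) (b + 1) c).2.1 + j = 2 * (2 * a + b + e) := by
  simp only [latticePoint]
  push_cast
  linarith

lemma map_pentagramF (j : ℤ) (n : ℕ) :
    pentagramPhi n (pentagramR n (pentagramF j n)) =
      ∑ I ∈ (layerQ n ∪ layerQ (n + 1)).powerset.filter
          (IsDownClosedIn pentagramCovers (layerQ n ∪ layerQ (n + 1))),
        ∏ p ∈ I, specializedVar n (3 * p.1 + p.2.1 + j) := by
  simp only [pentagramF_eq_sum_isDownClosedIn, map_sum, map_prod, specializedVar]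

theorem stmt12 (n : ℕ) (hn : 3 ≤ n) (hodd : Odd (n : ℤ)) (j : ℤ) (hj : Even j) :
    ∃ (ε : ℤ) (d : ZMod (2 * n) →₀ ℕ), (ε = 1 ∨ ε = -1) ∧
      pentagramPhi n (pentagramR n (pentagramF j n)) =
        C ε * monomial d 1 * (1 + X (0 : ZMod (2 * n))) ^ n := by
  have hthree : Odd (3 : ℤ) := by decide
  obtain ⟨e, he⟩ : 2 ∣ 3 - 3 * (n : ℤ) + j := ((hthree.sub_odd (hthree.mul hodd)).add hj).two_dvd
  obtain ⟨π, hπ⟩ := exists_perm_apply_eq_iff_dvd hodd e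
  set w : ℤ × ℤ × ℤ → MvPolynomial (ZMod (2 * n)) ℤ :=
    fun p => specializedVar n (3 * p.1 + p.2.1 + j)
  have hw : ∀ (a b : Fin n) (c : ℕ), w (latticePoint (n + 1) (a + 1) (b + 1) c) =
      specializedVar n (2 * (2 * a + b + e)) := fun a b c =>
    congrArg (specializedVar n) (latticePoint_succ_variable_index he)
  have hneg : ∀ (a b : Fin n) (c : ℕ), π a ≠ b →
      w (latticePoint (n + 1) (a + 1) (b + 1) c) = -1 := fun a b c hab =>
    (hw a b c).trans (specializedVar_two_mul_of_not_dvd (by omega) (mt (hπ a b).mpr hab))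
  have hX : ∀ (a : Fin n) (c : ℕ), w (latticePoint (n + 1) (a + 1) (π a + 1) c) = X 0 :=
    fun a c => (hw a (π a) c).trans (specializedVar_two_mul_of_dvd ((hπ a (π a)).mp rfl))
  have hw_prod : ∀ J : Finset (ℤ × ℤ × ℤ), ∏ p ∈ J, w p ∈ signedMonomials (ZMod (2 * n)) :=
    fun J => prod_mem fun p _ => specializedVar_mem_signedMonomials n _
  obtain ⟨ε, d, hε, hd⟩ := mul_mem (hw_prod (aboveGraph n (permCorner π)))
    (hw_prod (forcedQ n (aboveGraph n (permCorner π))))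
  refine ⟨ε, d, hε, ?_⟩
  rw [map_pentagramF, sum_isDownClosedIn_prod_eq_of_perm hneg, hd]
  simp only [hX, Finset.prod_const, Finset.card_univ, Fintype.card_fin]

end
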